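/- arXiv:1912.04383 — 4 statements merged into one kernel-verified Lean document; each statement's English description precedes it below -/
import Mathlib

section
/- Let k ≥ 1 and let F₁, …, F_k be nonempty finite subsets of ℝⁿ, and let e₁, …, e_k denote the standard basis of ℝᵏ. Let C ⊆ ℝⁿ × ℝᵏ be the Cayley polytope, i.e. the convex hull of the union over j = 1, …, k of the sets {(v, e_j) : v ∈ F_j}, and let F = convexHull(F₁) + ⋯ + convexHull(F_k) be the Minkowski sum of the convex hulls. Then the intersection of C with the affine slice ℝⁿ × {(1/k, …, 1/k)} equals the set {((1/k)·v, (1/k, …, 1/k)) : v ∈ F}; moreover the map v ↦ ((1/k)·v, (1/k, …, 1/k)) is a bijection from F onto this intersection. -/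
/-!
The Cayley polytope `C` is the convex hull of the fibres `F j × {e_j}`.

A convex combination of points `(v i, e_{c i})` with `v i ∈ F (c i)` and weights `w i` has second
component `a ↦ ∑_{c i = a} w i`. It lies on the slice exactly when every such partial sum is
`1/k`; then rescaling by `k` turns the weights over each `a` into convex weights, so that
`k • ∑ w i • v i = ∑ a, ∑_{c i = a} (k * w i) • v i` is a sum of points of the `convexHull (F a)`
(`exists_sum_of_mem_cayley`). Conversely, the barycentre of the points `(x a, e_a)` with
`x a ∈ convexHull (F a)` is a point of `C` on the slice (`barycentre_mem_cayley`).
Injectivity of `v ↦ ((1/k) • v, …)` is clear because `k ≠ 0`.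
-/

open Pointwise

/-- `k` times the first component of a point of the Cayley polytope at height `(1/k, …, 1/k)`
splits into summands from the individual convex hulls: group the convex combination by fibre. -/
lemma exists_sum_of_mem_cayley {n k : ℕ} (hk : 1 ≤ k) (F : Fin k → Set (Fin n → ℝ))
    {p : (Fin n → ℝ) × (Fin k → ℝ)}
    (hp : p ∈ convexHull ℝ (⋃ j : Fin k, (fun v => (v, Pi.single j (1 : ℝ))) '' F j))
    (hp2 : p.2 = fun _ : Fin k => (k : ℝ)⁻¹) :
    ∃ x : Fin k → Fin n → ℝ, (∀ a, x a ∈ convexHull ℝ (F a)) ∧ ∑ a, x a = (k : ℝ) • p.1 := by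
  have hk0 : (k : ℝ) ≠ 0 := by positivity
  obtain ⟨ι, _, w, z, hw0, -, hz, rfl⟩ := mem_convexHull_iff_exists_fintype.1 hp
  simp only [Set.mem_iUnion, Set.mem_image] at hz
  choose c v hv hz using hz
  obtain rfl : (fun i => (v i, Pi.single (c i) (1 : ℝ))) = z := funext hz
  -- The weights over each fibre add up to `1/k`.
  have hfib : ∀ a, ∑ i with c i = a, w i = (k : ℝ)⁻¹ := fun a => by
    have h := congrFun hp2 a
    simp only [Prod.snd_sum, Prod.smul_snd, Finset.sum_apply, Pi.smul_apply, Pi.single_apply,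
      smul_eq_mul, mul_ite, mul_one, mul_zero] at h
    rw [Finset.sum_filter, ← h]
    exact Finset.sum_congr rfl fun i _ => by simp only [eq_comm]
  refine ⟨fun a => ∑ i with c i = a, ((k : ℝ) * w i) • v i, fun a => ?_, ?_⟩
  · refine (convex_convexHull ℝ (F a)).sum_mem (fun i _ => mul_nonneg (by positivity) (hw0 i)) ?_ ?_
    · rw [← Finset.mul_sum, hfib, mul_inv_cancel₀ hk0]
    · intro i hi
      obtain rfl := (Finset.mem_filter.1 hi).2
      exact subset_convexHull ℝ _ (hv i)
  · rw [Finset.sum_fiberwise]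
    simp [Prod.fst_sum, Finset.smul_sum, mul_smul]

lemma barycentre_mem_cayley {n k : ℕ} (hk : 1 ≤ k) (F : Fin k → Set (Fin n → ℝ))
    {x : Fin k → Fin n → ℝ} (hx : ∀ a, x a ∈ convexHull ℝ (F a)) :
    ((k : ℝ)⁻¹ • ∑ a, x a, fun _ : Fin k => (k : ℝ)⁻¹) ∈
      convexHull ℝ (⋃ j : Fin k, (fun v => (v, Pi.single j (1 : ℝ))) '' F j) := by
  have hk0 : (k : ℝ) ≠ 0 := by positivity
  have hmem : ∀ a, (x a, Pi.single a (1 : ℝ)) ∈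
      convexHull ℝ (⋃ j : Fin k, (fun v => (v, Pi.single j (1 : ℝ))) '' F j) := fun a => by
    refine convexHull_mono ?_ (mk_mem_convexHull_prod (hx a)
      (subset_convexHull ℝ _ (Set.mem_singleton _)))
    rintro ⟨u, e⟩ ⟨hu, rfl⟩
    exact Set.mem_iUnion.2 ⟨a, u, hu, rfl⟩
  have h := (convex_convexHull ℝ _).sum_mem (t := Finset.univ) (w := fun _ : Fin k => (k : ℝ)⁻¹)
    (fun _ _ => by positivity) (by simp [hk0]) (fun a _ => hmem a)
  convert h using 1
  ext b
  · simp [Prod.fst_sum, Finset.mul_sum]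
  · simp [Prod.snd_sum, Pi.single_apply]

/-- The slice of the Cayley polytope of `F₁, …, F_k` at height `(1/k, …, 1/k)` is the
image of the Minkowski sum `F = convexHull F₁ + ⋯ + convexHull F_k` under the map
`v ↦ ((1/k) • v, (1/k, …, 1/k))`, and this map is a bijection from `F` onto the slice. -/
theorem cayley_slice (n k : ℕ) (hk : 1 ≤ k) (F : Fin k → Set (Fin n → ℝ))
    (hfin : ∀ j, (F j).Finite) (hne : ∀ j, (F j).Nonempty)
    (C : Set ((Fin n → ℝ) × (Fin k → ℝ)))
    (hC : C = convexHull ℝ (⋃ j : Fin k, (fun v => (v, Pi.single j (1 : ℝ))) '' F j))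
    (Fsum : Set (Fin n → ℝ))
    (hFsum : Fsum = ∑ j : Fin k, convexHull ℝ (F j))
    (slice : Set ((Fin n → ℝ) × (Fin k → ℝ)))
    (hslice : slice = {p | p.2 = fun _ : Fin k => (k : ℝ)⁻¹}) :
    C ∩ slice = (fun v : Fin n → ℝ => (((k : ℝ)⁻¹) • v, fun _ : Fin k => (k : ℝ)⁻¹)) '' Fsum ∧
    Set.BijOn (fun v : Fin n → ℝ => (((k : ℝ)⁻¹) • v, fun _ : Fin k => (k : ℝ)⁻¹))
      Fsum (C ∩ slice) := by
  have hk0 : (k : ℝ) ≠ 0 := by positivity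
  have key : C ∩ slice =
      (fun v : Fin n → ℝ => (((k : ℝ)⁻¹) • v, fun _ : Fin k => (k : ℝ)⁻¹)) '' Fsum := by
    subst hC hFsum hslice
    ext p
    constructor
    · rintro ⟨hp, hp2⟩
      obtain ⟨x, hx, hsum⟩ := exists_sum_of_mem_cayley hk F hp hp2
      refine ⟨(k : ℝ) • p.1, (Set.mem_fintype_sum _ _).2 ⟨x, hx, hsum⟩, ?_⟩
      exact Prod.ext (inv_smul_smul₀ hk0 _) (Eq.symm hp2)
    · rintro ⟨v, hv, rfl⟩
      obtain ⟨x, hx, rfl⟩ := (Set.mem_fintype_sum _ _).1 hv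
      exact ⟨barycentre_mem_cayley hk F hx, rfl⟩
  refine ⟨key, key ▸ Set.InjOn.bijOn_image fun u _ v _ huv => ?_⟩
  exact smul_right_injective _ (inv_ne_zero hk0) (Prod.ext_iff.1 huv).1
end

section
/- The set of tuples (a₁, a₂, a₃, a₄, a₅) ∈ ℝ⁵ for which there exists a linear map φ : ℝ³ → ℝ with φ(2,1,1) = a₁, φ(1,2,1) = a₂, φ(0,1,1) = a₃, φ(1,0,1) = a₅ (with a₄ unconstrained) is equal to the set of tuples (a₁, a₂, a₃, a₄, a₅) ∈ ℝ⁵ for which there exist linear maps φ₁, φ₂, φ₃ : ℝ³ → ℝ with φ₁(0,0,1) = a₄, φ₁(1,0,1) = a₅, φ₁(2,1,1) = a₁, φ₂(2,1,1) = a₁, φ₂(1,2,1) = a₂, φ₃(1,2,1) = a₂, φ₃(0,1,1) = a₃, φ₃(0,0,1) = a₄, and φ₁(1,1,1) = φ₂(1,1,1) = φ₃(1,1,1). -/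
/-!
Both sets are the hyperplane `a₁ + a₃ = a₂ + a₅`. For the first condition this is the only linear
relation among the four rays, `(2,1,1) + (0,1,1) = (1,2,1) + (1,0,1)`. For the second, the relations
`(0,0,1) + (2,1,1) = (1,0,1) + (1,1,1)` and `(0,0,1) + (1,2,1) = (0,1,1) + (1,1,1)` force the value
on the interior ray to be both `a₄ + a₁ - a₅` and `a₄ + a₂ - a₃`, while `φ₂` can take any value
there since its three rays are linearly independent.
-/

/-- A linear form on `ℝ³` with prescribed coefficients. -/
theorem exists_linear_form (p q r : ℝ) :
    ∃ φ : (Fin 3 → ℝ) →ₗ[ℝ] ℝ, ∀ x y z : ℝ, φ ![x, y, z] = p * x + q * y + r * z :=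
  ⟨p • LinearMap.proj 0 + q • LinearMap.proj 1 + r • LinearMap.proj 2, fun x y z => by simp⟩

theorem linear_relation (φ : (Fin 3 → ℝ) →ₗ[ℝ] ℝ) {u v w t : Fin 3 → ℝ} (h : u + v = w + t) :
    φ u + φ v = φ w + φ t := by
  rw [← map_add, h, map_add]

/-- The subset of `ℝ⁵` of tuples extending to a linear function on the cone over the
quadrilateral (the `Y₁` condition; `a₄` unconstrained) equals the subset of tuples
extending to the three cones of the subdivided pentagon with agreement along the
interior ray (the `Y₂` condition): `Pic(Y₁) = Pic(Y₂)` inside `Pic(Z⁰)`. -/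
theorem typeI_picard_groups_agree :
    {a : ℝ × ℝ × ℝ × ℝ × ℝ | ∃ φ : (Fin 3 → ℝ) →ₗ[ℝ] ℝ,
      φ ![2, 1, 1] = a.1 ∧ φ ![1, 2, 1] = a.2.1 ∧ φ ![0, 1, 1] = a.2.2.1 ∧
      φ ![1, 0, 1] = a.2.2.2.2} =
    {a : ℝ × ℝ × ℝ × ℝ × ℝ | ∃ φ₁ φ₂ φ₃ : (Fin 3 → ℝ) →ₗ[ℝ] ℝ,
      φ₁ ![0, 0, 1] = a.2.2.2.1 ∧ φ₁ ![1, 0, 1] = a.2.2.2.2 ∧ φ₁ ![2, 1, 1] = a.1 ∧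
      φ₂ ![2, 1, 1] = a.1 ∧ φ₂ ![1, 2, 1] = a.2.1 ∧
      φ₃ ![1, 2, 1] = a.2.1 ∧ φ₃ ![0, 1, 1] = a.2.2.1 ∧ φ₃ ![0, 0, 1] = a.2.2.2.1 ∧
      φ₁ ![1, 1, 1] = φ₂ ![1, 1, 1] ∧ φ₂ ![1, 1, 1] = φ₃ ![1, 1, 1]} := by
  ext ⟨a₁, a₂, a₃, a₄, a₅⟩
  simp only [Set.mem_setOf_eq]
  constructor
  · rintro ⟨φ, h₁, h₂, h₃, h₅⟩
    have h : a₁ + a₃ = a₂ + a₅ := by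
      rw [← h₁, ← h₂, ← h₃, ← h₅]
      refine linear_relation φ ?_
      norm_num
    -- All three forms take the value `a₄ + a₁ - a₅` on the interior ray `(1,1,1)`.
    obtain ⟨φ₁, e₁⟩ := exists_linear_form (a₅ - a₄) (a₁ - 2 * a₅ + a₄) a₄
    obtain ⟨φ₂, e₂⟩ := exists_linear_form (a₅ - a₄) (a₂ - (a₄ + a₁ - a₅))
      (3 * (a₄ + a₁ - a₅) - a₁ - a₂)
    obtain ⟨φ₃, e₃⟩ := exists_linear_form (a₂ - 2 * a₃ + a₄) (a₃ - a₄) a₄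
    refine ⟨φ₁, φ₂, φ₃, ?_⟩
    simp only [e₁, e₂, e₃]
    refine ⟨?_, ?_, ?_, ?_, ?_, ?_, ?_, ?_, ?_, ?_⟩ <;> linarith
  · rintro ⟨φ₁, φ₂, φ₃, h₁₄, h₁₅, h₁₁, -, -, h₃₂, h₃₃, h₃₄, h₁₂, h₂₃⟩
    have r₁ : φ₁ ![0, 0, 1] + φ₁ ![2, 1, 1] = φ₁ ![1, 0, 1] + φ₁ ![1, 1, 1] :=
      linear_relation φ₁ (by norm_num)
    have r₃ : φ₃ ![0, 0, 1] + φ₃ ![1, 2, 1] = φ₃ ![0, 1, 1] + φ₃ ![1, 1, 1] :=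
      linear_relation φ₃ (by norm_num)
    -- The coefficients are determined by the values at `(2,1,1)`, `(0,1,1)` and `(1,0,1)`.
    obtain ⟨φ, e⟩ := exists_linear_form ((a₁ - a₃) / 2) (a₃ - a₅ + (a₁ - a₃) / 2)
      (a₅ - (a₁ - a₃) / 2)
    refine ⟨φ, ?_⟩
    simp only [e]
    refine ⟨?_, ?_, ?_, ?_⟩ <;> linarith
end

section
/- Let P be the convex hull in ℝ³ of the seven points (0,0,1), (0,1,−1), (1,1,−1), (1,0,−1), (0,−1,−1), (−1,−1,−1), (−1,0,−1). Then 0 lies in the interior of P, and the dual polytope P* = {x ∈ ℝ³ : ⟨x, y⟩ ≥ −1 for all y ∈ P} satisfies P* = convexHull(P* ∩ ℤ³); that is, P is a reflexive polytope. -/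
/-!
Write a point of `ℝ³` as `(a, b, c)`. Testing a linear inequality on `P` amounts to testing it on
the seven vertices, so the dual is cut out by `-1 ≤ c` and `|a|, |b|, |a + b| ≤ 1 - c`
(`dual_eq`). This is the pyramid with apex `(0, 0, 1)` whose base, at height `-1`, is the hexagon
with vertices `±(2, 0)`, `±(0, 2)`, `±(2, -2)`; all of these, and the centre `(0, 0, -1)` of the
base, are lattice points. Cutting the base from its centre into six triangles cuts the pyramid into
six simplices, and in each of them the barycentric coordinates are explicit, so every point of the
dual is a convex combination of lattice points of the dual.

For the interior claim, the apex and four of the base vertices of `P` already suffice: the explicit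
convex weights used represent every point of a small sup-norm ball around `0`.
-/

open Matrix

/-- The defining inequalities of the dual of the convex hull of the seven points: one inequality
per vertex. -/
def DualIneqs (x : Fin 3 → ℝ) : Prop :=
  -1 ≤ x 2 ∧ -1 ≤ x 1 - x 2 ∧ -1 ≤ x 0 + x 1 - x 2 ∧ -1 ≤ x 0 - x 2 ∧
    -1 ≤ -x 1 - x 2 ∧ -1 ≤ -x 0 - x 1 - x 2 ∧ -1 ≤ -x 0 - x 2

/-- The pairing of a convex hull with `x` is bounded below as soon as it is on the generators. -/
lemma dual_convexHull (V : Set (Fin 3 → ℝ)) (x : Fin 3 → ℝ) :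
    (∀ y ∈ convexHull ℝ V, x ⬝ᵥ y ≥ -1) ↔ ∀ y ∈ V, x ⬝ᵥ y ≥ -1 := by
  refine ⟨fun h y hy => h y (subset_convexHull ℝ V hy), fun h y hy => ?_⟩
  have hc : Convex ℝ {y : Fin 3 → ℝ | x ⬝ᵥ y ≥ -1} :=
    convex_halfSpace_ge
      ⟨fun u v => dotProduct_add x u v, fun r u => dotProduct_smul r x u⟩ (-1)
  exact convexHull_min h hc hy

lemma dual_eq (x : Fin 3 → ℝ) :
    (∀ y ∈ convexHull ℝ
      ({![0, 0, 1], ![0, 1, -1], ![1, 1, -1], ![1, 0, -1],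
        ![0, -1, -1], ![-1, -1, -1], ![-1, 0, -1]} : Set (Fin 3 → ℝ)), x ⬝ᵥ y ≥ -1) ↔
      DualIneqs x := by
  rw [dual_convexHull]
  simp [DualIneqs, dotProduct, Fin.sum_univ_three, sub_eq_add_neg]

lemma convex_dualIneqs : Convex ℝ {x | DualIneqs x} := by
  rintro x ⟨h1, h2, h3, h4, h5, h6, h7⟩ y ⟨k1, k2, k3, k4, k5, k6, k7⟩ s t hs ht hst
  simp only [Set.mem_ofPred_eq, DualIneqs, Pi.add_apply, Pi.smul_apply, smul_eq_mul]
  refine ⟨?_, ?_, ?_, ?_, ?_, ?_, ?_⟩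
  · linarith [mul_le_mul_of_nonneg_left h1 hs, mul_le_mul_of_nonneg_left k1 ht]
  · linarith [mul_le_mul_of_nonneg_left h2 hs, mul_le_mul_of_nonneg_left k2 ht]
  · linarith [mul_le_mul_of_nonneg_left h3 hs, mul_le_mul_of_nonneg_left k3 ht]
  · linarith [mul_le_mul_of_nonneg_left h4 hs, mul_le_mul_of_nonneg_left k4 ht]
  · linarith [mul_le_mul_of_nonneg_left h5 hs, mul_le_mul_of_nonneg_left k5 ht]
  · linarith [mul_le_mul_of_nonneg_left h6 hs, mul_le_mul_of_nonneg_left k6 ht]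
  · linarith [mul_le_mul_of_nonneg_left h7 hs, mul_le_mul_of_nonneg_left k7 ht]

lemma zero_mem_interior_of_five {S : Set (Fin 3 → ℝ)} (hS : Convex ℝ S)
    (h0 : ![0, 0, 1] ∈ S) (h1 : ![1, 0, -1] ∈ S) (h2 : ![-1, 0, -1] ∈ S)
    (h3 : ![0, 1, -1] ∈ S) (h4 : ![0, -1, -1] ∈ S) : (0 : Fin 3 → ℝ) ∈ interior S := by
  rw [mem_interior_iff_mem_nhds, Metric.mem_nhds_iff]
  refine ⟨1 / 8, by norm_num, fun x hx => ?_⟩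
  rw [mem_ball_zero_iff] at hx
  have hb (i : Fin 3) : -(1 / 8) < x i ∧ x i < 1 / 8 :=
    abs_lt.1 ((norm_le_pi_norm x i).trans_lt hx)
  obtain ⟨a1, a2⟩ := hb 0
  obtain ⟨b1, b2⟩ := hb 1
  obtain ⟨c1, c2⟩ := hb 2
  -- Height `x 2` fixes the weight of the apex; the rest is spread evenly over the four base
  -- points, then shifted within opposite pairs to produce `x 0` and `x 1`.
  let w : Fin 5 → ℝ := ![(1 + x 2) / 2, (1 - x 2) / 8 + x 0 / 2, (1 - x 2) / 8 - x 0 / 2,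
    (1 - x 2) / 8 + x 1 / 2, (1 - x 2) / 8 - x 1 / 2]
  let v : Fin 5 → Fin 3 → ℝ :=
    ![![0, 0, 1], ![1, 0, -1], ![-1, 0, -1], ![0, 1, -1], ![0, -1, -1]]
  have key : ∑ i, w i • v i ∈ S := by
    refine hS.sum_mem (fun i _ => ?_) ?_ (fun i _ => ?_)
    · fin_cases i <;> simp [w] <;> linarith
    · simp [w, Fin.sum_univ_five]; ring
    · fin_cases i <;> simpa [v]
  convert key using 1
  ext j
  fin_cases j <;> simp [w, v, Fin.sum_univ_five] <;> ring

/-- One of the six simplices of the pyramid: `(p, q)` and `(p', q')` are two vertices of the base,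
and `r`, `r'` the barycentric weights there. The weight of the apex `(0, 0, 1)` is then
`(1 + x 2) / 2`, and the centre `(0, 0, -1)` of the base takes what is left. -/
lemma mem_of_simplex {S : Set (Fin 3 → ℝ)} (hS : Convex ℝ S)
    (hapex : ![0, 0, 1] ∈ S) (hcentre : ![0, 0, -1] ∈ S) {x : Fin 3 → ℝ} (hx : -1 ≤ x 2)
    {p q p' q' : ℝ} (h : ![p, q, -1] ∈ S) (h' : ![p', q', -1] ∈ S) (r r' : ℝ)
    (hr : 0 ≤ r) (hr' : 0 ≤ r') (hle : r + r' ≤ (1 - x 2) / 2)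
    (h0 : x 0 = r * p + r' * p') (h1 : x 1 = r * q + r' * q') : x ∈ S := by
  let w : Fin 4 → ℝ := ![(1 + x 2) / 2, (1 - x 2) / 2 - r - r', r, r']
  let v : Fin 4 → Fin 3 → ℝ := ![![0, 0, 1], ![0, 0, -1], ![p, q, -1], ![p', q', -1]]
  have key : ∑ i, w i • v i ∈ S := by
    refine hS.sum_mem (fun i _ => ?_) ?_ (fun i _ => ?_)
    · fin_cases i <;> simp [w] <;> linarith
    · simp [w, Fin.sum_univ_four]; ring
    · fin_cases i <;> simpa [v]
  convert key using 1
  ext j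
  fin_cases j <;> simp [w, v, Fin.sum_univ_four]
  · exact h0
  · exact h1
  · ring

lemma mem_of_dualIneqs {S : Set (Fin 3 → ℝ)} (hS : Convex ℝ S)
    (hlat : ∀ m n k : ℤ, DualIneqs ![(m : ℝ), n, k] → ![(m : ℝ), n, k] ∈ S)
    {x : Fin 3 → ℝ} (hx : DualIneqs x) : x ∈ S := by
  have apex : ![0, 0, 1] ∈ S := by
    simpa using hlat 0 0 1 (by simp [DualIneqs])
  have centre : ![0, 0, -1] ∈ S := by
    simpa using hlat 0 0 (-1) (by simp [DualIneqs])
  have e : ![2, 0, -1] ∈ S := by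
    simpa using hlat 2 0 (-1) (by simp [DualIneqs]; norm_num)
  have e' : ![-2, 0, -1] ∈ S := by
    simpa using hlat (-2) 0 (-1) (by simp [DualIneqs]; norm_num)
  have f : ![0, 2, -1] ∈ S := by
    simpa using hlat 0 2 (-1) (by simp [DualIneqs]; norm_num)
  have f' : ![0, -2, -1] ∈ S := by
    simpa using hlat 0 (-2) (-1) (by simp [DualIneqs]; norm_num)
  have g : ![2, -2, -1] ∈ S := by
    simpa using hlat 2 (-2) (-1) (by simp [DualIneqs]; norm_num)
  have g' : ![-2, 2, -1] ∈ S := by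
    simpa using hlat (-2) 2 (-1) (by simp [DualIneqs]; norm_num)
  obtain ⟨h1, h2, h3, h4, h5, h6, h7⟩ := hx
  -- The signs of `x 0`, `x 1` and `x 0 + x 1` select the triangle of the hexagon.
  rcases le_total 0 (x 0) with ha | ha <;> rcases le_total 0 (x 1) with hb | hb
  · exact mem_of_simplex hS apex centre h1 e f (x 0 / 2) (x 1 / 2)
      (by linarith) (by linarith) (by linarith) (by ring) (by ring)
  · rcases le_total 0 (x 0 + x 1) with hc | hc
    · exact mem_of_simplex hS apex centre h1 e g ((x 0 + x 1) / 2) (-x 1 / 2)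
        (by linarith) (by linarith) (by linarith) (by ring) (by ring)
    · exact mem_of_simplex hS apex centre h1 f' g (-(x 0 + x 1) / 2) (x 0 / 2)
        (by linarith) (by linarith) (by linarith) (by ring) (by ring)
  · rcases le_total 0 (x 0 + x 1) with hc | hc
    · exact mem_of_simplex hS apex centre h1 f g' ((x 0 + x 1) / 2) (-x 0 / 2)
        (by linarith) (by linarith) (by linarith) (by ring) (by ring)
    · exact mem_of_simplex hS apex centre h1 e' g' (-(x 0 + x 1) / 2) (x 1 / 2)
        (by linarith) (by linarith) (by linarith) (by ring) (by ring)
  · exact mem_of_simplex hS apex centre h1 e' f' (-x 0 / 2) (-x 1 / 2)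
      (by linarith) (by linarith) (by linarith) (by ring) (by ring)

/-- The polytope with vertices `(0,0,1)`, `(0,1,−1)`, `(1,1,−1)`, `(1,0,−1)`,
`(0,−1,−1)`, `(−1,−1,−1)`, `(−1,0,−1)` contains the origin in its interior and is
reflexive: its dual equals the convex hull of the dual's lattice points. -/
theorem polytope122_reflexive
    (P : Set (Fin 3 → ℝ))
    (hP : P = convexHull ℝ
      ({![0, 0, 1], ![0, 1, -1], ![1, 1, -1], ![1, 0, -1],
        ![0, -1, -1], ![-1, -1, -1], ![-1, 0, -1]} : Set (Fin 3 → ℝ)))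
    (Pd : Set (Fin 3 → ℝ))
    (hPd : Pd = {x : Fin 3 → ℝ | ∀ y ∈ P, x ⬝ᵥ y ≥ -1}) :
    0 ∈ interior P ∧
      Pd = convexHull ℝ (Pd ∩ {x : Fin 3 → ℝ | ∀ i, ∃ m : ℤ, x i = (m : ℝ)}) := by
  have hPd' : Pd = {x | DualIneqs x} := by
    rw [hPd, hP]
    ext x
    exact dual_eq x
  constructor
  · rw [hP]
    refine zero_mem_interior_of_five (convex_convexHull ℝ _) ?_ ?_ ?_ ?_ ?_ <;>
      exact subset_convexHull ℝ _ (by simp)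
  · rw [hPd']
    refine Set.Subset.antisymm (fun x hx => ?_)
      (convexHull_min Set.inter_subset_left convex_dualIneqs)
    refine mem_of_dualIneqs (convex_convexHull ℝ _) (fun m n k h => ?_) hx
    refine subset_convexHull ℝ _ ⟨h, fun i => ?_⟩
    fin_cases i
    exacts [⟨m, rfl⟩, ⟨n, rfl⟩, ⟨k, rfl⟩]
end

section
/- Let P be the convex hull in ℝ³ of the five points (1,0,0), (0,1,0), (0,0,1), (−1,−1,−1), (−1,−1,2). Then 0 lies in the interior of P, and the dual polytope P* = {x ∈ ℝ³ : ⟨x, y⟩ ≥ −1 for all y ∈ P} satisfies P* = convexHull(P* ∩ ℤ³); that is, P is a reflexive polytope. -/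
open Matrix

/-!
The four points `(1,0,0)`, `(0,1,0)`, `(0,0,1)`, `(-1,-1,-1)` already span a simplex with
barycentre `0`, and its barycentric coordinates are positive near `0`; hence `0` is interior to `P`.

A linear inequality holds on `P` as soon as it holds at the generators, so `P*` is the set of
`(a, b, c)` with `a, b, c ≥ -1`, `a + b + c ≤ 1` and `a + b - 2c ≤ 1` (`mem_dual_iff`). At height
`c` this is a right triangle with corner `(-1,-1,c)` and legs of length `min (3 - c) (3 + 2c)`.
The plane `c = 0` cuts `P*` into two pieces with lattice vertices: the part `c ≥ 0` is the
tetrahedron over the triangle at height `0` with apex `(-1,-1,3)`, and the part `c ≤ 0` is a frustum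
between the triangles at heights `-1` and `0` (legs `1` and `3`). Explicit barycentric coordinates
in the two pieces express each point of `P*` as a convex combination of lattice points of `P*`.
-/

/-- A convex set is closed under four-point convex combinations. -/
lemma Convex.combo_four {E : Type*} [AddCommGroup E] [Module ℝ E] {s : Set E} (hs : Convex ℝ s)
    {p q r t : E} (hp : p ∈ s) (hq : q ∈ s) (hr : r ∈ s) (ht : t ∈ s)
    {α β γ δ : ℝ} (hα : 0 ≤ α) (hβ : 0 ≤ β) (hγ : 0 ≤ γ) (hδ : 0 ≤ δ)
    (hsum : α + β + γ + δ = 1) : α • p + β • q + γ • r + δ • t ∈ s := by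
  have h := hs.sum_mem (t := Finset.univ) (w := ![α, β, γ, δ]) (z := ![p, q, r, t])
    (by intro i _; fin_cases i <;> simpa) (by simpa [Fin.sum_univ_four] using hsum)
    (by intro i _; fin_cases i <;> simpa)
  simpa [Fin.sum_univ_four] using h

/-- The facet description of the dual: it suffices to test the inequality at the generators. -/
lemma mem_dual_iff (x : Fin 3 → ℝ) :
    (∀ y ∈ convexHull ℝ
      ({![1, 0, 0], ![0, 1, 0], ![0, 0, 1], ![-1, -1, -1], ![-1, -1, 2]} :
        Set (Fin 3 → ℝ)), x ⬝ᵥ y ≥ -1) ↔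
    -1 ≤ x 0 ∧ -1 ≤ x 1 ∧ -1 ≤ x 2 ∧ x 0 + x 1 + x 2 ≤ 1 ∧ x 0 + x 1 - 2 * x 2 ≤ 1 := by
  have hc : Convex ℝ {y : Fin 3 → ℝ | -1 ≤ x ⬝ᵥ y} :=
    convex_halfSpace_ge ⟨dotProduct_add x, fun c y => dotProduct_smul c x y⟩ _
  have h := hc.convexHull_subset_iff
    (s := {![1, 0, 0], ![0, 1, 0], ![0, 0, 1], ![-1, -1, -1], ![-1, -1, 2]})
  refine Iff.trans h ?_
  simp only [Set.insert_subset_iff, Set.singleton_subset_iff, Set.mem_ofPred_eq, dotProduct,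
    Fin.sum_univ_three, Matrix.cons_val]
  constructor
  · rintro ⟨h1, h2, h3, h4, h5⟩
    refine ⟨?_, ?_, ?_, ?_, ?_⟩ <;> linarith
  · rintro ⟨h1, h2, h3, h4, h5⟩
    refine ⟨?_, ?_, ?_, ?_, ?_⟩ <;> linarith

/-- The polytope with vertices `(1,0,0)`, `(0,1,0)`, `(0,0,1)`, `(−1,−1,−1)`,
`(−1,−1,2)` contains the origin in its interior and is reflexive: its dual equals the
convex hull of the dual's lattice points. -/
theorem polytope34_reflexive
    (P : Set (Fin 3 → ℝ))
    (hP : P = convexHull ℝ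
      ({![1, 0, 0], ![0, 1, 0], ![0, 0, 1], ![-1, -1, -1], ![-1, -1, 2]} :
        Set (Fin 3 → ℝ)))
    (Pd : Set (Fin 3 → ℝ))
    (hPd : Pd = {x : Fin 3 → ℝ | ∀ y ∈ P, x ⬝ᵥ y ≥ -1}) :
    0 ∈ interior P ∧
      Pd = convexHull ℝ (Pd ∩ {x : Fin 3 → ℝ | ∀ i, ∃ m : ℤ, x i = (m : ℝ)}) := by
  subst hP
  have hmem (x : Fin 3 → ℝ) : x ∈ Pd ↔ -1 ≤ x 0 ∧ -1 ≤ x 1 ∧ -1 ≤ x 2 ∧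
      x 0 + x 1 + x 2 ≤ 1 ∧ x 0 + x 1 - 2 * x 2 ≤ 1 := by
    rw [hPd]; exact mem_dual_iff x
  constructor
  · rw [mem_interior_iff_mem_nhds]
    refine Filter.mem_of_superset (Metric.ball_mem_nhds 0 (by norm_num : (0 : ℝ) < 1 / 8)) ?_
    intro x hx
    have hb (i : Fin 3) : |x i| < 1 / 8 :=
      (norm_le_pi_norm x i).trans_lt (by simpa using hx)
    have h0 := abs_lt.mp (hb 0)
    have h1 := abs_lt.mp (hb 1)
    have h2 := abs_lt.mp (hb 2)
    set S := convexHull ℝ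
      ({![1, 0, 0], ![0, 1, 0], ![0, 0, 1], ![-1, -1, -1], ![-1, -1, 2]} :
        Set (Fin 3 → ℝ)) with hS
    -- `d` is the barycentric coordinate of `x` at the vertex `(-1,-1,-1)`
    set d : ℝ := (1 - x 0 - x 1 - x 2) / 4 with hd
    have key : (x 0 + d) • ![1, 0, 0] + (x 1 + d) • ![0, 1, 0] + (x 2 + d) • ![0, 0, 1]
        + d • ![-1, -1, -1] ∈ S := by
      refine (convex_convexHull ℝ _).combo_four ?_ ?_ ?_ ?_ ?_ ?_ ?_ ?_ ?_
      iterate 4 exact subset_convexHull ℝ _ (by simp)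
      all_goals linarith
    convert key using 1
    ext i
    fin_cases i <;> simp
  · have hconv : Convex ℝ Pd := by
      have : Pd = ⋂ y ∈ convexHull ℝ
          ({![1, 0, 0], ![0, 1, 0], ![0, 0, 1], ![-1, -1, -1], ![-1, -1, 2]} :
            Set (Fin 3 → ℝ)), {x | -1 ≤ x ⬝ᵥ y} := by
        rw [hPd]; ext x; simp
      rw [this]
      exact convex_iInter₂ fun y _ => convex_halfSpace_ge
        ⟨fun u v => add_dotProduct u v y, fun c u => smul_dotProduct c u y⟩ _
    refine Set.Subset.antisymm ?_ (convexHull_min Set.inter_subset_left hconv)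
    intro x hx
    obtain ⟨h0, h1, h2, h3, h4⟩ := (hmem x).mp hx
    set S := convexHull ℝ (Pd ∩ {x : Fin 3 → ℝ | ∀ i, ∃ m : ℤ, x i = (m : ℝ)}) with hS
    have hlat (a b c : ℤ) (h : -1 ≤ a ∧ -1 ≤ b ∧ -1 ≤ c ∧ a + b + c ≤ 1 ∧ a + b - 2 * c ≤ 1) :
        ![(a : ℝ), b, c] ∈ S := by
      refine subset_convexHull ℝ _ ⟨(hmem _).mpr ?_, ?_⟩
      · simp only [Matrix.cons_val]
        exact_mod_cast h
      · intro i
        fin_cases i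
        exacts [⟨a, rfl⟩, ⟨b, rfl⟩, ⟨c, rfl⟩]
    have hS_conv : Convex ℝ S := convex_convexHull ℝ _
    have a1 := hlat 2 (-1) 0 (by norm_num)
    have a2 := hlat (-1) 2 0 (by norm_num)
    have a3 := hlat (-1) (-1) 0 (by norm_num)
    have top := hlat (-1) (-1) 3 (by norm_num)
    have b1 := hlat 0 (-1) (-1) (by norm_num)
    have b2 := hlat (-1) 0 (-1) (by norm_num)
    have b3 := hlat (-1) (-1) (-1) (by norm_num)
    rcases le_total 0 (x 2) with hc | hc
    · have key := hS_conv.combo_four a1 a2 top a3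
        (α := (x 0 + 1) / 3) (β := (x 1 + 1) / 3) (γ := x 2 / 3)
        (δ := (1 - x 0 - x 1 - x 2) / 3)
        (by linarith) (by linarith) (by linarith) (by linarith) (by ring)
      convert key using 1
      ext i
      fin_cases i <;> simp <;> ring
    · -- `s` is the leg length of the triangular slice at height `x 2`; the point `x` lies on the
      -- segment joining the points with equal barycentric coordinates in the two end triangles
      set s : ℝ := 3 + 2 * x 2 with hs
      have hs0 : 0 < s := by linarith
      have e : (x 0 + 1) / s + (x 1 + 1) / s + (s - x 0 - x 1 - 2) / s = 1 := by
        field_simp; ring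
      have p1 : 0 ≤ (x 0 + 1) / s := div_nonneg (by linarith) hs0.le
      have p2 : 0 ≤ (x 1 + 1) / s := div_nonneg (by linarith) hs0.le
      have p3 : 0 ≤ (s - x 0 - x 1 - 2) / s := div_nonneg (by linarith) hs0.le
      have k0 := hS_conv.combo_four a1 a2 a3 a3 p1 p2 p3 le_rfl (by linarith)
      have k1 := hS_conv.combo_four b1 b2 b3 b3 p1 p2 p3 le_rfl (by linarith)
      have key := hS_conv k0 k1 (a := 1 + x 2) (b := -x 2) (by linarith) (by linarith) (by ring)
      convert key using 1
      ext i
      fin_cases i <;> simp <;> field_simp <;> rw [hs] <;> ring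
end
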